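/- The functional H̃ : ℝ^E → ℝ is C¹-smooth and convex, and ∂H̃/∂l_e(l) = −K̃_e(l) for all l ∈ ℝ^E and all e ∈ E; consequently, l ∈ ℝ^E is a zero-curvature generalized decorated metric (K̃(l) = 0) if and only if l is a critical point of H̃. -/

import Mathlib

noncomputable section

open Real Set Filter

/-- The generalized Euclidean triangle angle `aᵢ(x)` opposite the side of length `x i`,
for a generalized triangle with (positive) side lengths `x 0, x 1, x 2`:
it is `π` if `x i ≥ x j + x k`, `0` if some other side is at least the sum of the
remaining two, and otherwise the usual Euclidean angle `arccos((xⱼ²+x_k²−xᵢ²)/(2xⱼx_k))`. -/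
noncomputable def genAngle (x : Fin 3 → ℝ) (i : Fin 3) : ℝ :=
  if x (i + 1) + x (i + 2) ≤ x i then Real.pi
  else if x i + x (i + 2) ≤ x (i + 1) ∨ x i + x (i + 1) ≤ x (i + 2) then 0
  else Real.arccos
    ((x (i + 1) ^ 2 + x (i + 2) ^ 2 - x i ^ 2) / (2 * x (i + 1) * x (i + 2)))

/-- The three side lengths `e^{(l₁₂+l₃₄)/2}, e^{(l₁₃+l₂₄)/2}, e^{(l₁₄+l₂₃)/2}` of the
generalized Euclidean triangle associated to a length vector `l ∈ ℝ⁶`.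
Edge indices: `0 ↔ {1,2}, 1 ↔ {1,3}, 2 ↔ {1,4}, 3 ↔ {2,3}, 4 ↔ {2,4}, 5 ↔ {3,4}`,
so opposite pairs of edges are `(0,5), (1,4), (2,3)`. -/
noncomputable def triSides (l : Fin 6 → ℝ) (k : Fin 3) : ℝ :=
  if k.val = 0 then Real.exp ((l 0 + l 5) / 2)
  else if k.val = 1 then Real.exp ((l 1 + l 4) / 2)
  else Real.exp ((l 2 + l 3) / 2)

/-- The quad (pair of opposite edges) containing the edge `p`. -/
def quadIndex (p : Fin 6) : Fin 3 :=
  if p.val = 0 ∨ p.val = 5 then 0 else if p.val = 1 ∨ p.val = 4 then 1 else 2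

/-- The extended dihedral angle `α_p(l)` of the generalized decorated tetrahedron with
length vector `l ∈ ℝ⁶` at the edge `p`. -/
noncomputable def dihedral (l : Fin 6 → ℝ) (p : Fin 6) : ℝ :=
  genAngle (triSides l) (quadIndex p)

/-- The edge index in `Fin 6` of the edge `{i,j}` of the tetrahedron on vertices `Fin 4`
(junk value for `i = j`). -/
def edgeOf (i j : Fin 4) : Fin 6 :=
  if (i.val = 0 ∧ j.val = 1) ∨ (i.val = 1 ∧ j.val = 0) then 0
  else if (i.val = 0 ∧ j.val = 2) ∨ (i.val = 2 ∧ j.val = 0) then 1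
  else if (i.val = 0 ∧ j.val = 3) ∨ (i.val = 3 ∧ j.val = 0) then 2
  else if (i.val = 1 ∧ j.val = 2) ∨ (i.val = 2 ∧ j.val = 1) then 3
  else if (i.val = 1 ∧ j.val = 3) ∨ (i.val = 3 ∧ j.val = 1) then 4
  else 5

/-- The two endpoints of the edge `p` of the tetrahedron. -/
def endPts (p : Fin 6) : Fin 4 × Fin 4 :=
  if p.val = 0 then (0, 1) else if p.val = 1 then (0, 2) else if p.val = 2 then (0, 3)
  else if p.val = 3 then (1, 2) else if p.val = 4 then (1, 3) else (2, 3)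

/-- The Lobachevsky function `Λ(x) = −∫₀ˣ ln|2 sin t| dt`. -/
noncomputable def lob (x : ℝ) : ℝ := -∫ t in (0:ℝ)..x, Real.log |2 * Real.sin t|

/-- The volume of the generalized decorated tetrahedron with length vector `l`. -/
noncomputable def vol6 (l : Fin 6 → ℝ) : ℝ := (1 / 2 : ℝ) * ∑ p : Fin 6, lob (dihedral l p)

/-- The co-volume function `cov(l) = 2 vol(l) + Σ α_p(l) l_p` on `ℝ⁶`. -/
noncomputable def cov6 (l : Fin 6 → ℝ) : ℝ := 2 * vol6 l + ∑ p : Fin 6, dihedral l p * l p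

/-- `𝓛 ⊂ ℝ⁶`: length vectors of genuine decorated ideal hyperbolic tetrahedra, i.e. those
whose associated generalized Euclidean triangle satisfies the strict triangle inequalities. -/
def Ldom : Set (Fin 6 → ℝ) :=
  {l | ∀ i : Fin 3, triSides l i < triSides l (i + 1) + triSides l (i + 2)}

/-- The action of `w ∈ ℝ⁴` on `l ∈ ℝ⁶`: `(w + l)_{ij} = l_{ij} + wᵢ + wⱼ`. -/
def act (w : Fin 4 → ℝ) (l : Fin 6 → ℝ) : Fin 6 → ℝ :=
  fun p => l p + w (endPts p).1 + w (endPts p).2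

/-- `ℝ̂⁴ = {w + 0 : w ∈ ℝ⁴} ⊂ ℝ⁶`. -/
def hatR4 : Set (Fin 6 → ℝ) := {x | ∃ w : Fin 4 → ℝ, x = act w 0}

/-- `i, j, k, h` are pairwise distinct, i.e. `{i,j,k,h} = {1,2,3,4}`. -/
def Distinct4 (i j k h : Fin 4) : Prop :=
  i ≠ j ∧ i ≠ k ∧ i ≠ h ∧ j ≠ k ∧ j ≠ h ∧ k ≠ h

variable {T E : Type*}

/-- The length vector in `ℝ⁶` induced on the tetrahedron `σ` by a metric `l : E → ℝ`. -/
def pullback (glue : T → Fin 6 → E) (l : E → ℝ) (σ : T) : Fin 6 → ℝ :=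
  fun p => l (glue σ p)

/-- The generalized Ricci curvature `K̃_e(l) = 2π − Σ_{σ} Σ_{p : glue σ p = e} α_p(l_σ)`. -/
noncomputable def Ric [Fintype T] [DecidableEq E] (glue : T → Fin 6 → E) (l : E → ℝ)
    (e : E) : ℝ :=
  2 * Real.pi -
    ∑ σ : T, ∑ p : Fin 6, if glue σ p = e then dihedral (pullback glue l σ) p else 0

/-- `𝓛(M,𝒯)`: the set of decorated hyperbolic polyhedral metrics. -/
def LMdom (glue : T → Fin 6 → E) : Set (E → ℝ) := {l | ∀ σ : T, pullback glue l σ ∈ Ldom}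

/-- `H̃(l) = Σ_σ cov(l_σ) − 2π Σ_e l_e`. -/
noncomputable def Htilde [Fintype T] [Fintype E] (glue : T → Fin 6 → E) (l : E → ℝ) : ℝ :=
  ∑ σ : T, cov6 (pullback glue l σ) - 2 * Real.pi * ∑ e : E, l e

/-- The valence `d_e` of an edge `e`: the number of pairs `(σ, p)` glued to `e`. -/
def valence [Fintype T] [DecidableEq E] (glue : T → Fin 6 → E) (e : E) : ℕ :=
  ∑ σ : T, ∑ p : Fin 6, if glue σ p = e then 1 else 0

/-- `(M,𝒯)` is edge-transitive: any edge can be mapped to any other edge by an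
automorphism of the triangulation. -/
def EdgeTransitive (glue : T → Fin 6 → E) : Prop :=
  ∀ e e' : E, ∃ (φ : T ≃ T) (ψ : E ≃ E) (ρ : T → Fin 4 ≃ Fin 4),
    (∀ (σ : T) (i j : Fin 4), i ≠ j →
      glue (φ σ) (edgeOf (ρ σ i) (ρ σ j)) = ψ (glue σ (edgeOf i j))) ∧ ψ e = e'

/-!
Half the co-volume of a tetrahedron with log-lengths `y` is the maximum of `∑ Λ(θᵢ) + ∑ θᵢ yᵢ` over
the angle triples `θ ≥ 0`, `∑ θᵢ = π`, attained at the angles of the generalized triangle with sides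
`exp yᵢ`. Indeed `∑ Λ(θᵢ)` is concave on the simplex of angle triples, and by the law of sines these
angles are a critical point; degenerate triangles are limits of genuine ones, up to a lengthening of
the longest side. A maximum of affine functions of `y` is convex, and the maximizing
angles form a subgradient; as they depend continuously on `y`, the co-volume is `C¹` with the angles
as its partial derivatives. `H̃` is a sum of co-volumes of linear functions of the metric, minus a
linear functional.
-/

open scoped Topology

/-! ### The Lobachevsky function -/

lemma intervalIntegrable_log_abs_two_mul_sin (a b : ℝ) :
    IntervalIntegrable (fun t => log |2 * sin t|) MeasureTheory.volume a b := by
  have hmero : MeromorphicOn (fun t : ℝ => 2 * sin t) (uIcc a b) := fun t _ =>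
    (by fun_prop : AnalyticAt ℝ (fun t : ℝ => 2 * sin t) t).meromorphicAt
  simpa only [norm_eq_abs] using hmero.intervalIntegrable_log_norm

lemma continuous_lob : Continuous lob :=
  (intervalIntegral.continuous_primitive intervalIntegrable_log_abs_two_mul_sin 0).neg

lemma hasDerivAt_lob {x : ℝ} (hx : sin x ≠ 0) : HasDerivAt lob (-log (2 * sin x)) x := by
  have hcont : ContinuousAt (fun t => log |2 * sin t|) x := by
    refine ContinuousAt.log (by fun_prop) ?_
    simpa using hx
  have hmeas : Measurable fun t => log |2 * sin t| := by fun_prop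
  rw [← log_abs]
  exact (intervalIntegral.integral_hasDerivAt_right (intervalIntegrable_log_abs_two_mul_sin 0 x)
    hmeas.stronglyMeasurable.stronglyMeasurableAtFilter hcont).neg

lemma hasDerivAt_log_two_mul_sin {x : ℝ} (hx : sin x ≠ 0) :
    HasDerivAt (fun t => log (2 * sin t)) (cot x) x := by
  convert ((hasDerivAt_sin x).const_mul 2).log (by simpa using hx) using 1
  rw [cot_eq_cos_div_sin, mul_div_mul_left _ _ two_ne_zero]

/-! ### Concavity of the volume on angle triples -/

/-- The simplex of angle triples of generalized Euclidean triangles. -/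
def angleSimplex : Set (Fin 3 → ℝ) := {θ | (∀ i, 0 ≤ θ i) ∧ ∑ i, θ i = π}

lemma le_pi_of_mem_angleSimplex {θ : Fin 3 → ℝ} (hθ : θ ∈ angleSimplex) (i : Fin 3) : θ i ≤ π :=
  hθ.2 ▸ Finset.single_le_sum (fun j _ => hθ.1 j) (Finset.mem_univ i)

lemma sin_pos_of_mem_angleSimplex {θ : Fin 3 → ℝ} (hθ : θ ∈ angleSimplex)
    (hpos : ∀ i, 0 < θ i) (i : Fin 3) : 0 < sin (θ i) := by
  refine sin_pos_of_pos_of_lt_pi (hpos i) (hθ.2 ▸ ?_)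
  exact Finset.single_lt_sum (j := i + 1) (by simp) (Finset.mem_univ i) (Finset.mem_univ _)
    (hpos _) fun k _ _ => (hpos k).le

lemma cot_add_cot {a b : ℝ} (ha : sin a ≠ 0) (hb : sin b ≠ 0) :
    cot a + cot b = sin (a + b) / (sin a * sin b) := by
  rw [cot_eq_cos_div_sin, cot_eq_cos_div_sin, sin_add]
  field_simp
  ring

lemma cot_mul_cot_add_cot_mul_cot_add_cot_mul_cot {a b c : ℝ} (ha : sin a ≠ 0) (hb : sin b ≠ 0)
    (hc : sin c ≠ 0) (hsum : a + b + c = π) :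
    cot a * cot b + cot b * cot c + cot c * cot a = 1 := by
  have hcos : cos c = sin a * sin b - cos a * cos b := by
    rw [eq_sub_of_add_eq' hsum, cos_pi_sub, cos_add, neg_sub]
  have hab : cot a * cot b + cot c * (cot a + cot b) = 1 := by
    rw [cot_add_cot ha hb, ← sin_pi_sub (a + b), ← hsum, add_sub_cancel_left]
    simp only [cot_eq_cos_div_sin]
    field_simp
    rw [hcos]
    ring
  linear_combination hab

/-- Multiplied by `cot a + cot c > 0`, the form is the sum of squares
`((cot a + cot c) u + cot c v)² + v²`, because its discriminant is
`cot a cot b + cot b cot c + cot c cot a = 1`. -/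
lemma cot_mul_sq_add_nonneg {a b c u v w : ℝ} (ha : 0 < sin a) (hb : 0 < sin b) (hc : 0 < sin c)
    (hsum : a + b + c = π) (huvw : u + v + w = 0) :
    0 ≤ cot a * u ^ 2 + cot b * v ^ 2 + cot c * w ^ 2 := by
  have hcot : 0 < cot a + cot c := by
    rw [cot_add_cot ha.ne' hc.ne', ← sin_pi_sub, ← hsum, add_right_comm, add_sub_cancel_left]
    positivity
  have hdisc := cot_mul_cot_add_cot_mul_cot_add_cot_mul_cot ha.ne' hb.ne' hc.ne' hsum
  have hsq : (cot a + cot c) * (cot a * u ^ 2 + cot b * v ^ 2 + cot c * w ^ 2) =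
      ((cot a + cot c) * u + cot c * v) ^ 2 + v ^ 2 := by
    rw [show w = -(u + v) by linarith]
    linear_combination v ^ 2 * hdisc
  exact nonneg_of_mul_nonneg_right (hsq ▸ by positivity) hcot

lemma hasDerivAt_line (a v t : ℝ) : HasDerivAt (fun t => a + t * v) v t := by
  simpa using ((hasDerivAt_id t).mul_const v).const_add a

lemma hasDerivAt_sum_lob_line {ι : Type*} [Fintype ι] {A v : ι → ℝ} {t : ℝ}
    (hsin : ∀ i, sin (A i + t * v i) ≠ 0) :
    HasDerivAt (fun t => ∑ i, lob (A i + t * v i))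
      (∑ i, -log (2 * sin (A i + t * v i)) * v i) t :=
  HasDerivAt.fun_sum fun i _ =>
    HasDerivAt.comp t (h₂ := lob) (hasDerivAt_lob (hsin i)) (hasDerivAt_line (A i) (v i) t)

lemma concaveOn_sum_lob_line {D : Set ℝ} (hD : Convex ℝ D) {A v : Fin 3 → ℝ}
    (hA : ∑ i, A i = π) (hv : ∑ i, v i = 0)
    (hsin : ∀ t ∈ interior D, ∀ i, 0 < sin (A i + t * v i)) :
    ConcaveOn ℝ D fun t => ∑ i, lob (A i + t * v i) := by
  refine concaveOn_of_hasDerivWithinAt2_nonpos hD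
    (f' := fun t => ∑ i, -log (2 * sin (A i + t * v i)) * v i)
    (f'' := fun t => ∑ i, -(cot (A i + t * v i) * v i) * v i) ?_ ?_ ?_ ?_
  · have := continuous_lob
    fun_prop
  · exact fun t ht => (hasDerivAt_sum_lob_line fun i => (hsin t ht i).ne').hasDerivWithinAt
  · exact fun t ht => (HasDerivAt.fun_sum fun i _ =>
      ((hasDerivAt_log_two_mul_sin (hsin t ht i).ne').comp t
        (hasDerivAt_line (A i) (v i) t)).neg.mul_const (v i)).hasDerivWithinAt
  · intro t ht
    have hsum : ∑ i, (A i + t * v i) = π := by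
      rw [Finset.sum_add_distrib, ← Finset.mul_sum, hA, hv, mul_zero, add_zero]
    rw [Fin.sum_univ_three] at hsum hv
    have := cot_mul_sq_add_nonneg (hsin t ht 0) (hsin t ht 1) (hsin t ht 2) hsum hv
    rw [Fin.sum_univ_three]
    linarith

lemma sum_lob_le_tangent {A θ : Fin 3 → ℝ} (hA : A ∈ angleSimplex) (hpos : ∀ i, 0 < A i)
    (hθ : θ ∈ angleSimplex) :
    ∑ i, lob (θ i) ≤ ∑ i, lob (A i) - ∑ i, log (2 * sin (A i)) * (θ i - A i) := by
  have hsum (t : ℝ) : ∑ i, (A i + t * (θ i - A i)) = π := by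
    rw [Finset.sum_add_distrib, ← Finset.mul_sum, Finset.sum_sub_distrib, hA.2, hθ.2]
    ring
  have hsin : ∀ t ∈ Ico (0 : ℝ) 1, ∀ i, 0 < sin (A i + t * (θ i - A i)) := by
    rintro t ⟨ht0, ht1⟩
    have hseg (i) : 0 < A i + t * (θ i - A i) := by
      have h₁ : 0 < (1 - t) * A i := mul_pos (by linarith) (hpos i)
      have h₂ : 0 ≤ t * θ i := mul_nonneg ht0 (hθ.1 i)
      linarith
    exact sin_pos_of_mem_angleSimplex ⟨fun i => (hseg i).le, hsum t⟩ hseg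
  have hconc := concaveOn_sum_lob_line (convex_Icc 0 1) hA.2
    (by rw [Finset.sum_sub_distrib, hA.2, hθ.2, sub_self] : ∑ i, (θ i - A i) = 0)
    fun t ht => hsin t (Ioo_subset_Ico_self (by simpa using ht))
  have hslope := hconc.slope_le_of_hasDerivAt (x := 0) (y := 1) (by simp) (by simp) one_pos
    (hasDerivAt_sum_lob_line fun i => (hsin 0 (by simp) i).ne')
  simp only [slope_def_field, one_mul, zero_mul, add_zero, sub_zero, div_one,
    add_sub_cancel, neg_mul, Finset.sum_neg_distrib] at hslope
  linarith

/-! ### Angles of generalized Euclidean triangles -/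

lemma eq_or_eq_add_one_or_eq_add_two : ∀ i j : Fin 3, j = i ∨ j = i + 1 ∨ j = i + 2 := by
  decide

section Triangle

variable {x : Fin 3 → ℝ} {i : Fin 3}

lemma genAngle_eq_arccos (hx : ∀ i, 0 < x i) (i : Fin 3) :
    genAngle x i =
      arccos ((x (i + 1) ^ 2 + x (i + 2) ^ 2 - x i ^ 2) / (2 * x (i + 1) * x (i + 2))) := by
  have h₀ := hx i
  have h₁ := hx (i + 1)
  have h₂ := hx (i + 2)
  unfold genAngle
  split_ifs with hlong hshort
  · rw [arccos_of_le_neg_one]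
    rw [div_le_iff₀ (by positivity)]
    nlinarith
  · rw [arccos_of_one_le]
    rw [le_div_iff₀ (by positivity)]
    rcases hshort with h | h <;> nlinarith
  · rfl

lemma genAngle_nonneg (hx : ∀ i, 0 < x i) (i : Fin 3) : 0 ≤ genAngle x i :=
  genAngle_eq_arccos hx i ▸ arccos_nonneg _

lemma genAngle_pos (hx : ∀ i, 0 < x i) (htri : ∀ i, x i < x (i + 1) + x (i + 2)) (i : Fin 3) :
    0 < genAngle x i := by
  have h₁ := hx (i + 1)
  have h₂ := hx (i + 2)
  have htri₁ : x (i + 1) < x (i + 2) + x i := by simpa [add_assoc] using htri (i + 1)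
  have htri₂ : x (i + 2) < x i + x (i + 1) := by simpa [add_assoc] using htri (i + 2)
  have hsq : (x (i + 1) - x (i + 2)) ^ 2 < x i ^ 2 :=
    sq_lt_sq' (by linarith) (by linarith)
  rw [genAngle_eq_arccos hx, arccos_pos, div_lt_one (by positivity)]
  linarith

lemma genAngle_eq_single (hx : ∀ i, 0 < x i) (hi : x (i + 1) + x (i + 2) ≤ x i) :
    genAngle x = Pi.single i π := by
  have h₀ := hx i
  have h₁ := hx (i + 1)
  have h₂ := hx (i + 2)
  funext j
  obtain rfl | rfl | rfl := eq_or_eq_add_one_or_eq_add_two i j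
  · simp [genAngle, hi]
  all_goals
    rw [Pi.single_eq_of_ne (by simp), genAngle_eq_arccos hx, arccos_of_one_le]
    simp only [add_assoc, Fin.reduceAdd, add_zero]
    rw [le_div_iff₀ (by positivity)]
    nlinarith

open EuclideanGeometry in
lemma genAngle_eq_angle {V P : Type*} [NormedAddCommGroup V] [InnerProductSpace ℝ V]
    [MetricSpace P] [NormedAddTorsor V P] {p : Fin 3 → P} (hx : ∀ i, 0 < x i)
    (hp : ∀ i, dist (p (i + 1)) (p (i + 2)) = x i) (i : Fin 3) :
    genAngle x i = ∠ (p (i + 1)) (p i) (p (i + 2)) := by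
  have h₁ : ‖p (i + 1) -ᵥ p i‖ = x (i + 2) := by
    rw [← hp (i + 2), ← dist_eq_norm_vsub, dist_comm]; simp [add_assoc]
  have h₂ : ‖p (i + 2) -ᵥ p i‖ = x (i + 1) := by
    rw [← hp (i + 1), ← dist_eq_norm_vsub]; simp [add_assoc]
  have h₀ : ‖(p (i + 1) -ᵥ p i) - (p (i + 2) -ᵥ p i)‖ = x i := by
    rw [vsub_sub_vsub_cancel_right, ← dist_eq_norm_vsub, hp]
  rw [genAngle_eq_arccos hx, EuclideanGeometry.angle, InnerProductGeometry.angle,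
    real_inner_eq_norm_mul_self_add_norm_mul_self_sub_norm_sub_mul_self_div_two, h₀, h₁, h₂]
  congr 1
  have := hx (i + 1)
  have := hx (i + 2)
  field_simp
  ring

lemma exists_triangle_dist_eq (hx : ∀ i, 0 < x i) (htri : ∀ i, x i ≤ x (i + 1) + x (i + 2)) :
    ∃ p : Fin 3 → ℂ, ∀ i, dist (p (i + 1)) (p (i + 2)) = x i := by
  have h₀ := hx 0
  have h₁ := hx 1
  have h₂ := hx 2
  have htri₀ : x 0 ≤ x 1 + x 2 := htri 0
  have htri₁ : x 1 ≤ x 2 + x 0 := htri 1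
  have htri₂ : x 2 ≤ x 0 + x 1 := htri 2
  set u := (x 1 ^ 2 + x 2 ^ 2 - x 0 ^ 2) / (2 * x 2) with hu
  have hux : 2 * x 2 * u = x 1 ^ 2 + x 2 ^ 2 - x 0 ^ 2 := by rw [hu]; field_simp
  have hu_sq : u ^ 2 ≤ x 1 ^ 2 := by
    refine sq_le_sq.2 (abs_le_abs ?_ ?_)
    · nlinarith
    · nlinarith
  have hv_sq : √(x 1 ^ 2 - u ^ 2) ^ 2 = x 1 ^ 2 - u ^ 2 := sq_sqrt (sub_nonneg.2 hu_sq)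
  refine ⟨![0, x 2, ⟨u, √(x 1 ^ 2 - u ^ 2)⟩], fun i => ?_⟩
  fin_cases i
  · have hdist : (x 2 - u) ^ 2 + (x 1 ^ 2 - u ^ 2) = x 0 ^ 2 := by linear_combination -hux
    simp [Complex.dist_eq_re_im, hv_sq, hdist, h₀.le]
  · simp [Complex.norm_eq_sqrt_sq_add_sq, hv_sq, h₁.le]
  · simp [Complex.dist_eq_re_im, h₂.le]

lemma sum_genAngle_of_triangle_le (hx : ∀ i, 0 < x i) (htri : ∀ i, x i ≤ x (i + 1) + x (i + 2)) :
    ∑ i, genAngle x i = π := by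
  obtain ⟨p, hp⟩ := exists_triangle_dist_eq hx htri
  have hne : p 1 ≠ p 2 := dist_pos.1 ((hx 0).trans_eq (hp 0).symm)
  rw [Fin.sum_univ_three, genAngle_eq_angle hx hp, genAngle_eq_angle hx hp,
    genAngle_eq_angle hx hp, add_comm (EuclideanGeometry.angle _ (p 0) _)]
  exact EuclideanGeometry.angle_add_angle_add_angle_eq_pi (p 0) hne

lemma genAngle_mem_angleSimplex (hx : ∀ i, 0 < x i) : genAngle x ∈ angleSimplex := by
  refine ⟨genAngle_nonneg hx, ?_⟩
  by_cases htri : ∀ i, x i ≤ x (i + 1) + x (i + 2)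
  · exact sum_genAngle_of_triangle_le hx htri
  · push Not at htri
    obtain ⟨i, hi⟩ := htri
    simp [genAngle_eq_single hx hi.le]

lemma sin_genAngle_mul (hx : ∀ i, 0 < x i) (htri : ∀ i, x i ≤ x (i + 1) + x (i + 2)) (i : Fin 3) :
    sin (genAngle x i) * x (i + 1) = sin (genAngle x (i + 1)) * x i := by
  obtain ⟨p, hp⟩ := exists_triangle_dist_eq hx htri
  have hsin := EuclideanGeometry.law_sin (p (i + 1)) (p i) (p (i + 2))
  rw [genAngle_eq_angle hx hp, genAngle_eq_angle hx hp, ← hp i, ← hp (i + 1)]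
  simpa [add_assoc, dist_comm] using hsin

end Triangle

/-! ### The variational principle -/

/-- The angles of the generalized triangle with side lengths `exp (y i)`. -/
def expAngle (y : Fin 3 → ℝ) : Fin 3 → ℝ := genAngle fun i => exp (y i)

lemma expAngle_mem_angleSimplex (y : Fin 3 → ℝ) : expAngle y ∈ angleSimplex :=
  genAngle_mem_angleSimplex fun i => exp_pos (y i)

lemma continuous_expAngle : Continuous expAngle := by
  refine continuous_pi fun i => ?_
  simp only [expAngle, genAngle_eq_arccos fun _ => exp_pos _]
  refine continuous_arccos.comp (Continuous.div (by fun_prop) (by fun_prop) fun y => ?_)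
  positivity

/-- The function of log-lengths `y` and independent angles `θ` whose maximum over
`θ ∈ angleSimplex` is half the co-volume. -/
def triangleCov (y θ : Fin 3 → ℝ) : ℝ := ∑ i, lob (θ i) + ∑ i, θ i * y i

lemma continuous_triangleCov : Continuous fun p : (Fin 3 → ℝ) × (Fin 3 → ℝ) =>
    triangleCov p.1 p.2 := by
  have := continuous_lob
  unfold triangleCov
  fun_prop

lemma triangleCov_update (y θ : Fin 3 → ℝ) (i : Fin 3) (a : ℝ) :
    triangleCov (Function.update y i a) θ = triangleCov y θ + θ i * (a - y i) := by
  have hsum (z : Fin 3 → ℝ) : ∑ j, θ j * z j = θ i * z i + ∑ j ∈ {i}ᶜ, θ j * z j :=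
    Fintype.sum_eq_add_sum_compl i _
  have hcompl : ∑ j ∈ {i}ᶜ, θ j * Function.update y i a j = ∑ j ∈ {i}ᶜ, θ j * y j :=
    Finset.sum_congr rfl fun j hj => by rw [Function.update_of_ne (by simpa using hj)]
  rw [triangleCov, triangleCov, hsum, hsum y, hcompl, Function.update_self]
  ring

lemma exists_log_two_mul_sin_expAngle {y : Fin 3 → ℝ}
    (htri : ∀ i, exp (y i) < exp (y (i + 1)) + exp (y (i + 2))) :
    ∃ c, ∀ i, log (2 * sin (expAngle y i)) = y i + c := by
  have hexp (i) : 0 < exp (y i) := exp_pos _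
  have hsin := sin_pos_of_mem_angleSimplex (expAngle_mem_angleSimplex y) (genAngle_pos hexp htri)
  have hstep (i) : log (2 * sin (expAngle y i)) - y i =
      log (2 * sin (expAngle y (i + 1))) - y (i + 1) := by
    have hlaw := congrArg (fun s => log (2 * s))
      (sin_genAngle_mul hexp (fun i => (htri i).le) i)
    change log (2 * (sin (expAngle y i) * exp (y (i + 1)))) =
      log (2 * (sin (expAngle y (i + 1)) * exp (y i))) at hlaw
    have h₀ := hsin i
    have h₁ := hsin (i + 1)
    rw [← mul_assoc, ← mul_assoc, log_mul (by positivity) (hexp _).ne',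
      log_mul (by positivity) (hexp _).ne', log_exp, log_exp] at hlaw
    linarith
  refine ⟨log (2 * sin (expAngle y 0)) - y 0, fun i => ?_⟩
  have h₀ := hstep 0
  have h₁ := hstep 1
  simp only [zero_add, Fin.reduceAdd] at h₀ h₁
  fin_cases i <;> dsimp only [Fin.zero_eta, Fin.mk_one, Fin.reduceFinMk] <;> linarith

/-- By the law of sines, `expAngle y` is a critical point of the concave function
`triangleCov y` on the simplex. -/
lemma triangleCov_le_of_triangle_lt {y θ : Fin 3 → ℝ} (hθ : θ ∈ angleSimplex)
    (htri : ∀ i, exp (y i) < exp (y (i + 1)) + exp (y (i + 2))) :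
    triangleCov y θ ≤ triangleCov y (expAngle y) := by
  obtain ⟨c, hc⟩ := exists_log_two_mul_sin_expAngle htri
  have hA := expAngle_mem_angleSimplex y
  have htangent := sum_lob_le_tangent hA (genAngle_pos (fun i => exp_pos (y i)) htri) hθ
  have hlin : ∑ i, log (2 * sin (expAngle y i)) * (θ i - expAngle y i) =
      ∑ i, θ i * y i - ∑ i, expAngle y i * y i := by
    have hzero : ∑ i, c * (θ i - expAngle y i) = 0 := by
      rw [← Finset.mul_sum, Finset.sum_sub_distrib, hθ.2, hA.2, sub_self, mul_zero]
    rw [← Finset.sum_sub_distrib, ← add_zero (∑ i, (_ - _)), ← hzero, ← Finset.sum_add_distrib]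
    exact Finset.sum_congr rfl fun i _ => by rw [hc]; ring
  unfold triangleCov
  linarith

lemma exp_mul_lt_exp_mul_add_exp_mul {a b c t : ℝ} (ht : t < 1) (ht₀ : 0 ≤ t)
    (h : exp a ≤ exp b + exp c) : exp (t * a) < exp (t * b) + exp (t * c) := by
  rcases le_or_gt a b with hab | hab
  · have : exp (t * a) ≤ exp (t * b) := by gcongr
    linarith [exp_pos (t * c)]
  rcases le_or_gt a c with hac | hac
  · have : exp (t * a) ≤ exp (t * c) := by gcongr
    linarith [exp_pos (t * b)]
  have hscale {s : ℝ} (hs : s < a) : exp s * exp ((t - 1) * a) < exp (t * s) := by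
    rw [← exp_add, exp_lt_exp]
    nlinarith
  calc exp (t * a) = exp a * exp ((t - 1) * a) := by rw [← exp_add]; ring_nf
    _ ≤ (exp b + exp c) * exp ((t - 1) * a) := by gcongr
    _ < exp (t * b) + exp (t * c) := by rw [add_mul]; exact add_lt_add (hscale hab) (hscale hac)

/-- Since `t • y` satisfies the strict inequalities for `t < 1`, the case of a degenerate triangle
follows by continuity. -/
lemma triangleCov_le_of_triangle_le {y θ : Fin 3 → ℝ} (hθ : θ ∈ angleSimplex)
    (htri : ∀ i, exp (y i) ≤ exp (y (i + 1)) + exp (y (i + 2))) :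
    triangleCov y θ ≤ triangleCov y (expAngle y) := by
  have hclosed : IsClosed {t : ℝ | triangleCov (t • y) θ ≤
      triangleCov (t • y) (expAngle (t • y))} := by
    have := continuous_expAngle
    exact isClosed_le
      (continuous_triangleCov.comp (by fun_prop : Continuous fun t : ℝ => (t • y, θ)))
      (continuous_triangleCov.comp
        (by fun_prop : Continuous fun t : ℝ => (t • y, expAngle (t • y))))
  have hstrict : Ico (0 : ℝ) 1 ⊆ {t : ℝ | triangleCov (t • y) θ ≤
      triangleCov (t • y) (expAngle (t • y))} := fun t ht =>
    triangleCov_le_of_triangle_lt hθ fun i => exp_mul_lt_exp_mul_add_exp_mul ht.2 ht.1 (htri i)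
  have hone : (1 : ℝ) ∈ closure (Ico 0 1) := by
    rw [closure_Ico zero_ne_one]
    exact right_mem_Icc.2 zero_le_one
  simpa using closure_minimal hstrict hclosed hone

lemma expAngle_eq_single {y : Fin 3 → ℝ} {i : Fin 3}
    (hi : exp (y (i + 1)) + exp (y (i + 2)) ≤ exp (y i)) : expAngle y = Pi.single i π :=
  genAngle_eq_single (fun j => exp_pos (y j)) hi

/-- Shortening the side `i` until the triangle inequality becomes an equality lowers
`triangleCov y θ` at the rate `θ i ≤ π`, and lowers the value at `Pi.single i π` at the rate `π`. -/
lemma triangleCov_le_of_add_le {y θ : Fin 3 → ℝ} {i : Fin 3} (hθ : θ ∈ angleSimplex)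
    (hi : exp (y (i + 1)) + exp (y (i + 2)) ≤ exp (y i)) :
    triangleCov y θ ≤ triangleCov y (expAngle y) := by
  set a := log (exp (y (i + 1)) + exp (y (i + 2)))
  have ha : exp a = exp (y (i + 1)) + exp (y (i + 2)) := exp_log (by positivity)
  have hay : a ≤ y i := exp_le_exp.1 (ha.trans_le hi)
  have hw₀ : Function.update y i a i = a := Function.update_self ..
  have hw₁ : Function.update y i a (i + 1) = y (i + 1) := Function.update_of_ne (by simp) ..
  have hw₂ : Function.update y i a (i + 2) = y (i + 2) := Function.update_of_ne (by simp) ..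
  have hdeg : exp (Function.update y i a i) =
      exp (Function.update y i a (i + 1)) + exp (Function.update y i a (i + 2)) := by
    rw [hw₀, hw₁, hw₂, ha]
  have htri (j) : exp (Function.update y i a j) ≤
      exp (Function.update y i a (j + 1)) + exp (Function.update y i a (j + 2)) := by
    have h₁ := exp_pos (Function.update y i a (i + 1))
    have h₂ := exp_pos (Function.update y i a (i + 2))
    obtain rfl | rfl | rfl := eq_or_eq_add_one_or_eq_add_two i j
    · exact hdeg.le
    all_goals
      simp only [add_assoc, Fin.reduceAdd, add_zero]
      linarith
  have hmax := triangleCov_le_of_triangle_le hθ htri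
  rw [expAngle_eq_single hdeg.ge, triangleCov_update, triangleCov_update, Pi.single_eq_same]
    at hmax
  have hrate := mul_le_mul_of_nonneg_right (le_pi_of_mem_angleSimplex hθ i) (sub_nonneg.2 hay)
  rw [expAngle_eq_single hi]
  linarith

theorem triangleCov_le_triangleCov_expAngle {θ : Fin 3 → ℝ} (hθ : θ ∈ angleSimplex)
    (y : Fin 3 → ℝ) : triangleCov y θ ≤ triangleCov y (expAngle y) := by
  by_cases htri : ∀ i, exp (y i) ≤ exp (y (i + 1)) + exp (y (i + 2))
  · exact triangleCov_le_of_triangle_le hθ htri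
  · push Not at htri
    obtain ⟨i, hi⟩ := htri
    exact triangleCov_le_of_add_le hθ hi.le

/-! ### Functions with a continuous subgradient -/

lemma convexOn_finsetSum {ι 𝕜 V β : Type*} [Semiring 𝕜] [PartialOrder 𝕜] [AddCommMonoid V]
    [Module 𝕜 V] [AddCommMonoid β] [PartialOrder β] [IsOrderedAddMonoid β] [Module 𝕜 β]
    {s : Set V} (hs : Convex 𝕜 s) {t : Finset ι} {f : ι → V → β}
    (hf : ∀ i ∈ t, ConvexOn 𝕜 s (f i)) : ConvexOn 𝕜 s fun x => ∑ i ∈ t, f i x := by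
  rw [← Finset.sum_fn]
  exact Finset.sum_induction f (ConvexOn 𝕜 s) (fun _ _ => ConvexOn.add) (convexOn_const 0 hs) hf

section Subgradient

variable {V : Type*}

lemma convexOn_of_subgradient [AddCommGroup V] [Module ℝ V] {s : Set V} (hs : Convex ℝ s)
    {f : V → ℝ} {D : V → V →ₗ[ℝ] ℝ} (h : ∀ x ∈ s, ∀ y ∈ s, f x + D x (y - x) ≤ f y) :
    ConvexOn ℝ s f := by
  refine ⟨hs, fun x hx y hy a b ha hb hab => ?_⟩
  set z := a • x + b • y with hz
  have hzs : z ∈ s := hs hx hy ha hb hab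
  have hbary : a * D z (x - z) + b * D z (y - z) = 0 := by
    have : a • (x - z) + b • (y - z) = 0 := by
      rw [smul_sub, smul_sub, sub_add_sub_comm, ← hz, ← add_smul, hab, one_smul, sub_self]
    simpa using congrArg (D z) this
  calc f z = a * (f z + D z (x - z)) + b * (f z + D z (y - z)) := by
        linear_combination -hbary - f z * hab
    _ ≤ a • f x + b • f y := by
        simp only [smul_eq_mul]
        gcongr
        exacts [h z hzs x hx, h z hzs y hy]

/-- The subgradient inequalities at `x` and at `y` sandwich the first-order error
`f y - f x - D x (y - x)` between `0` and `(D y - D x) (y - x)`. -/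
lemma hasFDerivAt_of_subgradient [NormedAddCommGroup V] [NormedSpace ℝ V] {s : Set V} {f : V → ℝ}
    {D : V → V →L[ℝ] ℝ} (h : ∀ x ∈ s, ∀ y ∈ s, f x + D x (y - x) ≤ f y) {x : V} (hx : s ∈ 𝓝 x)
    (hD : ContinuousAt D x) : HasFDerivAt f (D x) x := by
  rw [hasFDerivAt_iff_isLittleO, Asymptotics.isLittleO_iff]
  intro c hc
  filter_upwards [Metric.continuousAt_iff'.1 hD c hc, hx] with y hy hys
  have hlower := h x (mem_of_mem_nhds hx) y hys
  have hupper := h y hys x (mem_of_mem_nhds hx)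
  rw [← neg_sub y x, map_neg] at hupper
  rw [norm_of_nonneg (by linarith)]
  calc f y - f x - D x (y - x) ≤ (D y - D x) (y - x) := by
        rw [sub_apply]
        linarith
    _ ≤ ‖D y - D x‖ * ‖y - x‖ := (le_abs_self _).trans ((D y - D x).le_opNorm _)
    _ ≤ c * ‖y - x‖ := by
        gcongr
        exact (dist_eq_norm (D y) (D x) ▸ hy).le

end Subgradient

/-! ### The co-volume function -/

/-- The logarithms `(l_ij + l_kh) / 2` of the side lengths `triSides l`. -/
def oppositeMean (l : Fin 6 → ℝ) : Fin 3 → ℝ :=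
  ![(l 0 + l 5) / 2, (l 1 + l 4) / 2, (l 2 + l 3) / 2]

lemma continuous_oppositeMean : Continuous oppositeMean := by
  unfold oppositeMean
  fun_prop

lemma triSides_eq_exp_oppositeMean (l : Fin 6 → ℝ) :
    triSides l = fun k => exp (oppositeMean l k) := by
  funext k
  fin_cases k <;> rfl

lemma dihedral_eq_expAngle (l : Fin 6 → ℝ) (p : Fin 6) :
    dihedral l p = expAngle (oppositeMean l) (quadIndex p) := by
  rw [dihedral, triSides_eq_exp_oppositeMean, expAngle]

lemma continuous_dihedral (p : Fin 6) : Continuous fun l => dihedral l p := by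
  simp only [dihedral_eq_expAngle]
  exact (continuous_apply _).comp (continuous_expAngle.comp continuous_oppositeMean)

lemma sum_quadIndex (f : Fin 3 → Fin 6 → ℝ) :
    ∑ p, f (quadIndex p) p = f 0 0 + f 1 1 + f 2 2 + f 2 3 + f 1 4 + f 0 5 :=
  Fin.sum_univ_six _

lemma two_mul_triangleCov_oppositeMean (l : Fin 6 → ℝ) (θ : Fin 3 → ℝ) :
    2 * triangleCov (oppositeMean l) θ =
      ∑ p, lob (θ (quadIndex p)) + ∑ p, θ (quadIndex p) * l p := by
  simp only [triangleCov, Fin.sum_univ_three, sum_quadIndex fun k _ => lob (θ k),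
    sum_quadIndex fun k p => θ k * l p, oppositeMean, Matrix.cons_val]
  ring

lemma cov6_eq_two_mul_triangleCov (l : Fin 6 → ℝ) :
    cov6 l = 2 * triangleCov (oppositeMean l) (expAngle (oppositeMean l)) := by
  simp only [two_mul_triangleCov_oppositeMean, cov6, vol6, dihedral_eq_expAngle]
  ring

/-- The differential `∑ α_p dl_p` of the co-volume function at `l`. -/
def dihedralForm (l : Fin 6 → ℝ) : (Fin 6 → ℝ) →L[ℝ] ℝ :=
  ∑ p, dihedral l p • ContinuousLinearMap.proj p

lemma dihedralForm_apply (l v : Fin 6 → ℝ) : dihedralForm l v = ∑ p, dihedral l p * v p := by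
  simp [dihedralForm]

lemma continuous_dihedralForm : Continuous dihedralForm :=
  continuous_finsetSum _ fun p _ => (continuous_dihedral p).smul continuous_const

lemma cov6_add_dihedralForm_le (l m : Fin 6 → ℝ) :
    cov6 l + dihedralForm l (m - l) ≤ cov6 m := by
  have hvar := triangleCov_le_triangleCov_expAngle
    (expAngle_mem_angleSimplex (oppositeMean l)) (oppositeMean m)
  calc cov6 l + dihedralForm l (m - l)
      = 2 * triangleCov (oppositeMean m) (expAngle (oppositeMean l)) := by
        simp only [cov6_eq_two_mul_triangleCov, two_mul_triangleCov_oppositeMean,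
          dihedralForm_apply, dihedral_eq_expAngle, Pi.sub_apply, mul_sub, Finset.sum_sub_distrib]
        ring
    _ ≤ cov6 m := by
        rw [cov6_eq_two_mul_triangleCov]
        linarith

theorem convexOn_cov6 : ConvexOn ℝ univ cov6 :=
  convexOn_of_subgradient (D := fun l => dihedralForm l) convex_univ
    fun l _ m _ => cov6_add_dihedralForm_le l m

theorem hasFDerivAt_cov6 (l : Fin 6 → ℝ) : HasFDerivAt cov6 (dihedralForm l) l :=
  hasFDerivAt_of_subgradient (fun l _ m _ => cov6_add_dihedralForm_le l m) univ_mem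
    continuous_dihedralForm.continuousAt

theorem contDiff_cov6 : ContDiff ℝ 1 cov6 :=
  contDiff_one_iff_hasFDerivAt.2 ⟨dihedralForm, continuous_dihedralForm, hasFDerivAt_cov6⟩

/-! ### The functional `H̃` -/

section Htilde

/-- `pullback` as a continuous linear map of the metric. -/
def pullbackCLM (glue : T → Fin 6 → E) (σ : T) : (E → ℝ) →L[ℝ] (Fin 6 → ℝ) :=
  ContinuousLinearMap.pi fun p => ContinuousLinearMap.proj (glue σ p)

variable [Fintype E]

/-- The linear functional `l ↦ 2π Σ_e l_e`. -/
def totalLength : (E → ℝ) →L[ℝ] ℝ := (2 * π) • ∑ e, ContinuousLinearMap.proj e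

lemma totalLength_apply (l : E → ℝ) : totalLength l = 2 * π * ∑ e, l e := by
  simp [totalLength]

variable [Fintype T] (glue : T → Fin 6 → E)

lemma Htilde_eq : Htilde glue =
    fun l => ∑ σ, cov6 (pullbackCLM glue σ l) - totalLength l := by
  funext l
  rw [Htilde, totalLength_apply]
  rfl

theorem contDiff_Htilde : ContDiff ℝ 1 (Htilde glue) := by
  rw [Htilde_eq]
  exact (ContDiff.sum fun σ _ => contDiff_cov6.comp (pullbackCLM glue σ).contDiff).sub
    (totalLength (E := E)).contDiff

theorem convexOn_Htilde : ConvexOn ℝ univ (Htilde glue) := by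
  rw [Htilde_eq]
  exact (convexOn_finsetSum convex_univ fun σ _ =>
    convexOn_cov6.comp_linearMap (pullbackCLM glue σ).toLinearMap).sub
    (totalLength.toLinearMap.concaveOn convex_univ)

theorem hasFDerivAt_Htilde (l : E → ℝ) : HasFDerivAt (Htilde glue)
    (∑ σ, (dihedralForm (pullback glue l σ)).comp (pullbackCLM glue σ) - totalLength) l := by
  rw [Htilde_eq]
  exact (HasFDerivAt.fun_sum fun σ _ =>
    (hasFDerivAt_cov6 _).comp l (pullbackCLM glue σ).hasFDerivAt).sub totalLength.hasFDerivAt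

theorem fderiv_Htilde_single [DecidableEq E] (l : E → ℝ) (e : E) :
    fderiv ℝ (Htilde glue) l (Pi.single e 1) = -Ric glue l e := by
  rw [(hasFDerivAt_Htilde glue l).fderiv]
  simp [Ric, dihedralForm_apply, pullbackCLM, totalLength, Pi.single_apply]

end Htilde

/-- `H̃` is `C¹` and convex with `∂H̃/∂l_e = −K̃_e`; consequently `l` has zero
generalized Ricci curvature iff `l` is a critical point of `H̃`. -/
theorem Htilde_C1_convex_deriv_critical
    [Fintype T] [Fintype E] [DecidableEq E] [Nonempty T] (glue : T → Fin 6 → E) :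
    ContDiff ℝ 1 (Htilde glue) ∧ ConvexOn ℝ Set.univ (Htilde glue) ∧
    (∀ (l : E → ℝ) (e : E),
      fderiv ℝ (Htilde glue) l (Pi.single e 1) = - Ric glue l e) ∧
    (∀ l : E → ℝ, (∀ e : E, Ric glue l e = 0) ↔ fderiv ℝ (Htilde glue) l = 0) := by
  refine ⟨contDiff_Htilde glue, convexOn_Htilde glue, fderiv_Htilde_single glue, fun l => ?_⟩
  simp_rw [← neg_eq_zero (a := Ric glue l _), ← fderiv_Htilde_single]
  refine ⟨fun h => ?_, fun h e => by rw [h, zero_apply]⟩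
  exact ContinuousLinearMap.coe_injective (LinearMap.pi_ext' fun e => LinearMap.ext_ring (h e))
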